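/- Let r₀ > 0 and let φ : (0,r₀) → (0,∞) be nondecreasing. Let a > 0 and γ > β > 0. Then there exist positive numbers ε = ε(a,γ,β) and c = c(a,γ,β) with the following property: if b ≥ 0 and φ(ρ) ≤ a[(ρ/r)^γ + ε] φ(r) + b r^β for all 0 < ρ ≤ r < r₀, then also φ(ρ) ≤ c[(ρ/r)^β φ(r) + b ρ^β] for all 0 < ρ < r < r₀. -/

import Mathlib

open Set

/-!
Divide by the target power: for `ψ s = φ s / s ^ β` and `t = ρ / s ∈ (0, 1]` the hypothesis reads
`ψ (t s) ≤ a (t ^ (γ - β) + ε t ^ (-β)) ψ s + b t ^ (-β)`. Since `γ - β > 0`, some `τ < 1` has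
`a τ ^ (γ - β) ≤ 1 / 4`; with `ε = τ ^ γ` the coefficient of `ψ s` at `t = τ` is at most `1 / 2`,
so `ψ` stays bounded along `r, τ r, τ² r, …`. The same inequality with `t ∈ (τ, 1]` carries this
bound from the sequence to the radii in between.
-/

lemma le_add_div_one_sub_of_le_mul_add {u : ℕ → ℝ} {q K : ℝ} (hq₀ : 0 ≤ q) (hq₁ : q < 1)
    (hK : 0 ≤ K) (hu₀ : 0 ≤ u 0) (hu : ∀ n, u (n + 1) ≤ q * u n + K) (n : ℕ) :
    u n ≤ u 0 + K / (1 - q) := by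
  have hq : 0 < 1 - q := sub_pos.2 hq₁
  induction n with
  | zero => exact le_add_of_nonneg_right (by positivity)
  | succ n ih =>
    calc u (n + 1) ≤ q * u n + K := hu n
      _ ≤ q * (u 0 + K / (1 - q)) + K := by gcongr
      _ = q * u 0 + K / (1 - q) := by field_simp; ring
      _ ≤ u 0 + K / (1 - q) := by gcongr; exact mul_le_of_le_one_left hu₀ hq₁.le

lemma le_of_scale_contraction {ψ : ℝ → ℝ} {τ q K A B r : ℝ} (hτ₀ : 0 < τ) (hτ₁ : τ < 1)
    (hq₀ : 0 ≤ q) (hq₁ : q < 1) (hK : 0 ≤ K) (hA : 0 ≤ A) (hψ : 0 ≤ ψ r)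
    (hstep : ∀ s ∈ Ioc 0 r, ψ (τ * s) ≤ q * ψ s + K)
    (hfill : ∀ s ∈ Ioc 0 r, ∀ ρ ∈ Ioc (τ * s) s, ψ ρ ≤ A * ψ s + B) {ρ : ℝ} (hρ : ρ ∈ Ioc 0 r) :
    ψ ρ ≤ A * (ψ r + K / (1 - q)) + B := by
  have hr : 0 < r := hρ.1.trans_le hρ.2
  have hscale (n : ℕ) : τ ^ n * r ∈ Ioc 0 r :=
    ⟨by positivity, mul_le_of_le_one_left hr.le (pow_le_one₀ hτ₀.le hτ₁.le)⟩
  have hseq (n : ℕ) : ψ (τ ^ n * r) ≤ ψ r + K / (1 - q) := by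
    simpa using le_add_div_one_sub_of_le_mul_add (u := fun n ↦ ψ (τ ^ n * r)) hq₀ hq₁ hK
      (by simpa using hψ) (fun n ↦ by simpa only [pow_succ', mul_assoc] using hstep _ (hscale n)) n
  obtain ⟨n, hlt, hle⟩ := exists_nat_pow_near_of_lt_one (div_pos hρ.1 hr)
    ((div_le_one hr).2 hρ.2) hτ₀ hτ₁
  have hmem : ρ ∈ Ioc (τ * (τ ^ n * r)) (τ ^ n * r) :=
    ⟨by rwa [← mul_assoc, ← pow_succ', ← lt_div_iff₀ hr], (div_le_iff₀ hr).1 hle⟩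
  calc ψ ρ ≤ A * ψ (τ ^ n * r) + B := hfill _ (hscale n) ρ hmem
    _ ≤ A * (ψ r + K / (1 - q)) + B := by gcongr; exact hseq n

open Filter Topology in
lemma exists_mul_rpow_le {δ κ : ℝ} (a : ℝ) (hδ : 0 < δ) (hκ : 0 < κ) :
    ∃ τ : ℝ, 0 < τ ∧ τ < 1 ∧ a * τ ^ δ ≤ κ := by
  have htendsto : Tendsto (fun τ : ℝ ↦ a * τ ^ δ) (𝓝[>] 0) (𝓝 0) := by
    have hcont : ContinuousAt (fun τ : ℝ ↦ a * τ ^ δ) 0 :=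
      (Real.continuousAt_rpow_const 0 δ (.inr hδ.le)).const_mul a
    simpa [Real.zero_rpow hδ.ne'] using hcont.tendsto.mono_left nhdsWithin_le_nhds
  have hsmall : ∀ᶠ τ : ℝ in 𝓝[>] 0, τ ∈ Ioo 0 1 := Ioo_mem_nhdsGT one_pos
  obtain ⟨τ, hτ, hle⟩ := (hsmall.and (htendsto.eventually_le_const hκ)).exists
  exact ⟨τ, hτ.1, hτ.2, hle⟩

lemma rpow_le_max_one_rpow {τ t : ℝ} (x : ℝ) (hτ : 0 < τ) (hτt : τ ≤ t) (ht : t ≤ 1) :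
    t ^ x ≤ max 1 (τ ^ x) := by
  rcases le_total 0 x with hx | hx
  · exact le_max_of_le_left (Real.rpow_le_one (hτ.le.trans hτt) ht hx)
  · exact le_max_of_le_right (Real.rpow_le_rpow_of_nonpos hτ hτt hx)

lemma div_rpow_le_of_le_mul_add {x y a b β γ ε ρ s : ℝ} (hρ : 0 < ρ) (hs : 0 < s)
    (h : x ≤ a * ((ρ / s) ^ γ + ε) * y + b * s ^ β) :
    x / ρ ^ β ≤
      a * ((ρ / s) ^ (γ - β) + ε * (ρ / s) ^ (-β)) * (y / s ^ β) + b * (ρ / s) ^ (-β) := by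
  rw [div_le_iff₀ (by positivity)]
  refine h.trans_eq ?_
  rw [Real.rpow_sub (by positivity), Real.rpow_neg (by positivity), Real.div_rpow hρ.le hs.le β]
  field_simp

lemma le_of_rpow_scale_estimate {ψ : ℝ → ℝ} {a b β δ ε τ q M r ρ : ℝ} (ha : 0 ≤ a) (hb : 0 ≤ b)
    (hδ : 0 ≤ δ) (hε : 0 ≤ ε) (hτ₀ : 0 < τ) (hτ₁ : τ < 1)
    (hq : a * (τ ^ δ + ε * τ ^ (-β)) ≤ q) (hq₁ : q < 1) (hM : ∀ t ∈ Icc τ 1, t ^ (-β) ≤ M)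
    (hψ : ∀ s ∈ Ioc 0 r, 0 ≤ ψ s)
    (h : ∀ s ∈ Ioc 0 r, ∀ ρ ∈ Ioc 0 s,
      ψ ρ ≤ a * ((ρ / s) ^ δ + ε * (ρ / s) ^ (-β)) * ψ s + b * (ρ / s) ^ (-β))
    (hρ : ρ ∈ Ioc 0 r) :
    ψ ρ ≤ a * (1 + ε * M) * (ψ r + b * M / (1 - q)) + b * M := by
  have hq₀ : 0 ≤ q := le_trans (by positivity) hq
  have hM₀ : 0 ≤ M := le_trans (by positivity) (hM τ ⟨le_rfl, hτ₁.le⟩)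
  refine le_of_scale_contraction hτ₀ hτ₁ hq₀ hq₁ (by positivity) (by positivity)
    (hψ r ⟨hρ.1.trans_le hρ.2, le_rfl⟩) (fun s hs ↦ ?_) (fun s hs ρ' hρ' ↦ ?_) hρ
  · have hψs := hψ s hs
    have hτs := h s hs (τ * s) ⟨mul_pos hτ₀ hs.1, mul_le_of_le_one_left hs.1.le hτ₁.le⟩
    rw [mul_div_cancel_right₀ τ hs.1.ne'] at hτs
    calc ψ (τ * s) ≤ a * (τ ^ δ + ε * τ ^ (-β)) * ψ s + b * τ ^ (-β) := hτs
      _ ≤ q * ψ s + b * M := by gcongr; exact hM τ ⟨le_rfl, hτ₁.le⟩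
  · have hψs := hψ s hs
    have hρ'₀ : 0 < ρ' := (mul_pos hτ₀ hs.1).trans hρ'.1
    have hratio : ρ' / s ∈ Icc τ 1 := ⟨(le_div_iff₀ hs.1).2 hρ'.1.le, (div_le_one hs.1).2 hρ'.2⟩
    calc ψ ρ' ≤ a * ((ρ' / s) ^ δ + ε * (ρ' / s) ^ (-β)) * ψ s + b * (ρ' / s) ^ (-β) :=
          h s hs ρ' ⟨hρ'₀, hρ'.2⟩
      _ ≤ a * (1 + ε * M) * ψ s + b * M := by
          gcongr
          · exact Real.rpow_le_one (div_pos hρ'₀ hs.1).le hratio.2 hδ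
          · exact hM _ hratio
          · exact hM _ hratio

theorem iteration_lemma_general (a γ β : ℝ) (ha : 0 < a) (hβγ : β < γ) :
    ∃ ε : ℝ, 0 < ε ∧ ∃ c : ℝ, 0 < c ∧
      ∀ (r₀ : ℝ) (φ : ℝ → ℝ), (∀ r ∈ Ioo (0 : ℝ) r₀, 0 ≤ φ r) →
      ∀ b : ℝ, 0 ≤ b →
        (∀ ρ r : ℝ, 0 < ρ → ρ ≤ r → r < r₀ →
          φ ρ ≤ a * ((ρ / r) ^ γ + ε) * φ r + b * r ^ β) →
        ∀ ρ r : ℝ, 0 < ρ → ρ ≤ r → r < r₀ →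
          φ ρ ≤ c * ((ρ / r) ^ β * φ r + b * ρ ^ β) := by
  have hδ : 0 < γ - β := sub_pos.2 hβγ
  obtain ⟨τ, hτ₀, hτ₁, hτ⟩ := exists_mul_rpow_le a hδ (by norm_num : (0 : ℝ) < 1 / 4)
  have hcoeff : a * (τ ^ (γ - β) + τ ^ γ * τ ^ (-β)) ≤ 1 / 2 := by
    rw [← Real.rpow_add hτ₀, ← sub_eq_add_neg]
    linarith
  set M := max 1 (τ ^ (-β))
  set A := a * (1 + τ ^ γ * M)
  refine ⟨τ ^ γ, by positivity, A * (1 + 2 * M) + M, by positivity, ?_⟩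
  intro r₀ φ hφ b hb h ρ r hρ hρr hr
  have hr_pos : 0 < r := hρ.trans_le hρr
  have hφr : 0 ≤ φ r := hφ r ⟨hr_pos, hr⟩
  have hquot : φ ρ / ρ ^ β ≤ A * (φ r / r ^ β + b * M / (1 - 1 / 2)) + b * M :=
    le_of_rpow_scale_estimate (ψ := fun s ↦ φ s / s ^ β) ha.le hb hδ.le (by positivity) hτ₀ hτ₁
      hcoeff (by norm_num) (fun t ht ↦ rpow_le_max_one_rpow (-β) hτ₀ ht.1 ht.2)
      (fun s hs ↦ div_nonneg (hφ s ⟨hs.1, hs.2.trans_lt hr⟩) (Real.rpow_nonneg hs.1.le β))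
      (fun s hs ρ' hρ' ↦
        div_rpow_le_of_le_mul_add hρ'.1 hs.1 (h ρ' s hρ'.1 hρ'.2 (hs.2.trans_lt hr)))
      ⟨hρ, hρr⟩
  have hnonneg : 0 ≤ A * b + (2 * A * M + M) * (φ r / r ^ β) := by positivity
  calc φ ρ ≤ (A * (φ r / r ^ β + b * M / (1 - 1 / 2)) + b * M) * ρ ^ β :=
        (div_le_iff₀ (by positivity)).1 hquot
    _ ≤ (A * (1 + 2 * M) + M) * (φ r / r ^ β + b) * ρ ^ β := by
        gcongr
        linear_combination hnonneg
    _ = (A * (1 + 2 * M) + M) * ((ρ / r) ^ β * φ r + b * ρ ^ β) := by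
        rw [Real.div_rpow hρ.le hr_pos.le]
        ring

/-- iteration Lemma 2.4, cf. Han–Lin: let `φ : (0,r₀) → (0,∞)` be
nondecreasing, `a > 0` and `γ > β > 0`. There exist `ε = ε(a,γ,β) > 0` and
`c = c(a,γ,β) > 0` such that whenever `b ≥ 0` and
`φ(ρ) ≤ a[(ρ/r)^γ + ε] φ(r) + b r^β` for all `0 < ρ ≤ r < r₀`, then also
`φ(ρ) ≤ c[(ρ/r)^β φ(r) + b ρ^β]` for all `0 < ρ < r < r₀`. -/
theorem iteration_lemma (a γ β : ℝ) (ha : 0 < a) (hβ : 0 < β) (hγβ : β < γ) :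
    ∃ ε : ℝ, 0 < ε ∧ ∃ c : ℝ, 0 < c ∧
      ∀ (r₀ : ℝ), 0 < r₀ →
      ∀ φ : ℝ → ℝ, (∀ r ∈ Ioo (0 : ℝ) r₀, 0 < φ r) → MonotoneOn φ (Ioo (0 : ℝ) r₀) →
      ∀ b : ℝ, 0 ≤ b →
        (∀ ρ r : ℝ, 0 < ρ → ρ ≤ r → r < r₀ →
          φ ρ ≤ a * ((ρ / r) ^ γ + ε) * φ r + b * r ^ β) →
        ∀ ρ r : ℝ, 0 < ρ → ρ < r → r < r₀ →
          φ ρ ≤ c * ((ρ / r) ^ β * φ r + b * ρ ^ β) := by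
  obtain ⟨ε, hε, c, hc, hgrowth⟩ := iteration_lemma_general a γ β ha hγβ
  exact ⟨ε, hε, c, hc, fun r₀ _ φ hφ _ b hb h ρ r hρ hρr hr ↦
    hgrowth r₀ φ (fun s hs ↦ (hφ s hs).le) b hb h ρ r hρ hρr.le hr⟩
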